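/- Let C_n be a chord diagram chosen uniformly at random from all chord diagrams of size n, let c_1 be the chord of C_n containing the endpoint 1, and let deg(c_1) be its degree. Then for every constant b with 0 ≤ b ≤ 1/2, lim_{n→∞} P(deg(c_1) ≤ b·n) = 1 − √(1 − 2b). In other words, deg(c_1)/n converges in distribution to the random variable on [0,1/2] with density (1−2x)^{−1/2}. -/

import Mathlib

open scoped Classical
open Finset Filter

/-- A chord diagram of size `n`: a fixed-point-free involution of the `2n`
endpoints `0, 1, …, 2n-1` (endpoint `i` here corresponds to the label `i+1`). -/
abbrev ChordDiagram (n : ℕ) :=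
  {f : Fin (2*n) → Fin (2*n) // (∀ i, f (f i) = i) ∧ ∀ i, f i ≠ i}

/-- `c` lies strictly between `a` and `b`. -/
def Between {m : ℕ} (a b c : Fin m) : Prop := min a b < c ∧ c < max a b

/-- The chord of `C` containing endpoint `x` crosses the chord containing endpoint `u`:
exactly one of the two endpoints `u`, `C u` lies strictly between `x` and `C x`. -/
def Crosses {n : ℕ} (C : ChordDiagram n) (x u : Fin (2*n)) : Prop :=
  Xor' (Between x (C.1 x) u) (Between x (C.1 x) (C.1 u))

/-- Uniform probability of an event over all chord diagrams of size `n`. -/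
noncomputable def prob (n : ℕ) (E : ChordDiagram n → Prop) : ℝ :=
  ((Finset.univ.filter E).card : ℝ) / ((Finset.univ : Finset (ChordDiagram n)).card : ℝ)

/-- The degree of the chord of `C` containing endpoint `x`: the number of chords
crossing it (each chord counted once via its smaller endpoint). -/
noncomputable def chordDegree {n : ℕ} (C : ChordDiagram n) (x : Fin (2*n)) : ℕ :=
  (Finset.univ.filter fun u => u < C.1 u ∧ Crosses C x u).card

/-- The length of the chord of `C` containing endpoint `x`: the number of endpoints
on the smaller of the two arcs it determines. -/
def chordLength {n : ℕ} (C : ChordDiagram n) (x : Fin (2*n)) : ℕ :=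
  min (max (x:ℕ) (C.1 x : ℕ) - min (x:ℕ) (C.1 x : ℕ) - 1)
      (2*n - (max (x:ℕ) (C.1 x : ℕ) - min (x:ℕ) (C.1 x : ℕ)) - 1)

/-- Degree of the chord containing endpoint `1` (index `0`). -/
noncomputable def degreeC1 (n : ℕ) (C : ChordDiagram n) : ℕ :=
  if h : 0 < n then chordDegree C ⟨0, by omega⟩ else 0

/-- Length of the chord containing endpoint `1` (index `0`). -/
noncomputable def lengthC1 (n : ℕ) (C : ChordDiagram n) : ℕ :=
  if h : 0 < n then chordLength C ⟨0, by omega⟩ else 0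

/-- Membership in the component (w.r.t. the crossing relation) of the chord
containing the root endpoint. -/
def InRootComponent {n : ℕ} (C : ChordDiagram n) (root x : Fin (2*n)) : Prop :=
  x = root ∨ x = C.1 root ∨ Relation.ReflTransGen (fun a b => Crosses C a b) root x

/-- The chord containing `x` is simple: it joins two (cyclically) consecutive endpoints. -/
def IsSimple {n : ℕ} (C : ChordDiagram n) (x : Fin (2*n)) : Prop :=
  (C.1 x : ℕ) = ((x : ℕ) + 1) % (2*n) ∨ (x : ℕ) = ((C.1 x : ℕ) + 1) % (2*n)

/-- `C` is monolithic (with respect to `root`): every chord not in the root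
component is simple, and no two simple chords are next to each other. -/
def Monolithic {n : ℕ} (C : ChordDiagram n) (root : Fin (2*n)) : Prop :=
  (∀ x : Fin (2*n), ¬ InRootComponent C root x → IsSimple C x) ∧
  ¬ ∃ i : Fin (2*n), (C.1 i : ℕ) = ((i : ℕ) + 1) % (2*n) ∧
      ∃ j : Fin (2*n), (j : ℕ) = ((i : ℕ) + 2) % (2*n) ∧ (C.1 j : ℕ) = ((i : ℕ) + 3) % (2*n)

/-- `L_j`: the number of chords of length `j` in `C`. -/
noncomputable def lengthCount (n : ℕ) (j : ℕ) (C : ChordDiagram n) : ℕ :=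
  (Finset.univ.filter fun x : Fin (2*n) => x < C.1 x ∧ chordLength C x = j).card

/-- The endpoints of chords of `C` of length at least `k`. -/
noncomputable def lenAtLeast (n k : ℕ) (C : ChordDiagram n) : Finset (Fin (2*n)) :=
  Finset.univ.filter fun x => k ≤ chordLength C x

/-- The number of chords with endpoints in `S` crossing the chord containing `x`. -/
noncomputable def degreeIn {n : ℕ} (C : ChordDiagram n) (S : Finset (Fin (2*n)))
    (x : Fin (2*n)) : ℕ :=
  (S.filter fun u => u < C.1 u ∧ Crosses C x u).card

/-- `S` (a chord-closed set of endpoints) is a set of chords each crossing at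
least `k` other chords of `S`. -/
def IsCore {n : ℕ} (C : ChordDiagram n) (k : ℕ) (S : Finset (Fin (2*n))) : Prop :=
  (∀ x ∈ S, C.1 x ∈ S) ∧ ∀ x ∈ S, k ≤ degreeIn C S x

/-- The `k`-core: the union of all sets of chords in which every chord crosses
at least `k` other chords of the set. -/
noncomputable def kCore (n k : ℕ) (C : ChordDiagram n) : Finset (Fin (2*n)) :=
  Finset.univ.filter fun x => ∃ S : Finset (Fin (2*n)), IsCore C k S ∧ x ∈ S

/-- The number of chords in the `k`-core of `C`. -/
noncomputable def kCoreSize (n k : ℕ) (C : ChordDiagram n) : ℕ :=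
  ((kCore n k C).filter fun x => x < C.1 x).card

/-- `Z_k`: the number of chords of length strictly less than `k`. -/
noncomputable def shortCount (n k : ℕ) (C : ChordDiagram n) : ℕ :=
  (Finset.univ.filter fun x : Fin (2*n) => x < C.1 x ∧ chordLength C x < k).card

/-- `C` contains a balanced clique of size `m`: a set of `m` pairwise crossing
chords with exactly one endpoint in each of the `2m` blocks of length `⌊n/m⌋`. -/
def HasBalancedClique (n m : ℕ) (C : ChordDiagram n) : Prop :=
  ∃ S : Finset (Fin (2*n)),
    (∀ x ∈ S, C.1 x ∈ S) ∧
    (∀ x ∈ S, ∀ u ∈ S, u ≠ x → u ≠ C.1 x → Crosses C x u) ∧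
    (∀ t : ℕ, 1 ≤ t → t ≤ 2*m →
      (S.filter fun x => (t-1) * (n/m) ≤ (x:ℕ) ∧ (x:ℕ) < t * (n/m)).card = 1)

/-- An oriented chord diagram: a chord diagram together with auxiliary fair-coin
bits; the bit attached to a crossing pair of chords (indexed by their smaller
endpoints) decides which chord over-crosses the other. -/
abbrev OrientedChordDiagram (n : ℕ) := ChordDiagram n × (Fin (2*n) → Fin (2*n) → Bool)

/-- The smaller endpoint of the chord of `C` containing `x`. -/
def chordRep {n : ℕ} (C : ChordDiagram n) (x : Fin (2*n)) : Fin (2*n) := min x (C.1 x)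

/-- In the oriented diagram `D`, the chord containing `x` crosses and
over-crosses the chord containing `u`. -/
def OverD {n : ℕ} (D : OrientedChordDiagram n) (x u : Fin (2*n)) : Prop :=
  Crosses D.1 x u ∧
    ((chordRep D.1 x ≤ chordRep D.1 u ∧ D.2 (chordRep D.1 x) (chordRep D.1 u) = true) ∨
     (chordRep D.1 u < chordRep D.1 x ∧ D.2 (chordRep D.1 u) (chordRep D.1 x) = false))

/-- Uniform probability of an event over all oriented chord diagrams of size `n`
(this yields a uniformly random diagram with each crossing oriented by an
independent fair coin). -/
noncomputable def probD (n : ℕ) (E : OrientedChordDiagram n → Prop) : ℝ :=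
  ((Finset.univ.filter E).card : ℝ) /
    ((Finset.univ : Finset (OrientedChordDiagram n)).card : ℝ)

/-- The chords (given by their endpoints in `S`) are strongly connected in the
directed intersection graph of `D`, using only chords of `S`. -/
def StronglyConnectedIn {n : ℕ} (D : OrientedChordDiagram n) (S : Set (Fin (2*n))) : Prop :=
  ∀ c ∈ S, ∀ d ∈ S,
    Relation.ReflTransGen (fun a b => a ∈ S ∧ b ∈ S ∧ OverD D a b) c d

/-- The number of chords with both endpoints in the cyclic block
`{i, i+1, …, i+t-1}` (mod `2n`). -/
noncomputable def chordsInBlock (n : ℕ) (C : ChordDiagram n) (i t : ℕ) : ℕ :=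
  (Finset.univ.filter fun x : Fin (2*n) => x < C.1 x ∧
    (∃ a < t, (x:ℕ) = (i + a) % (2*n)) ∧ (∃ a < t, ((C.1 x : ℕ)) = (i + a) % (2*n))).card

/-- The chord of `x` reaches the chord of `u` in the directed intersection graph
(of the whole diagram); endpoints of the same chord represent the same vertex. -/
def ReachChord {n : ℕ} (D : OrientedChordDiagram n) (x u : Fin (2*n)) : Prop :=
  u = x ∨ u = D.1.1 x ∨ Relation.ReflTransGen (fun a b => OverD D a b) x u

/-- The chords of `x` and `u` lie in the same strong component. -/
def MutualReach {n : ℕ} (D : OrientedChordDiagram n) (x u : Fin (2*n)) : Prop :=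
  ReachChord D x u ∧ ReachChord D u x

/-- The number of single-chord strong components of `D`. -/
noncomputable def singleCount (n : ℕ) (D : OrientedChordDiagram n) : ℕ :=
  (Finset.univ.filter fun x : Fin (2*n) =>
    x < D.1.1 x ∧ ∀ u : Fin (2*n), u ≠ x → u ≠ D.1.1 x → ¬ MutualReach D x u).card

/-! Let `k` be the partner of endpoint `0`. The chords crossing the first chord join the two
arcs it cuts out, which hold `k - 1` and `2n - 1 - k` endpoints. By symmetry under relabelling, the
remaining chords form a uniform matching of these endpoints, so a given pair is a chord with
probability `1 / (2n - 3)` and two given disjoint pairs are both chords with probability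
`1 / ((2n - 3)(2n - 5))`. Hence, conditionally on `k`, the degree has mean
`(k - 1)(2n - 1 - k) / (2n - 3)`, within `1` of `n (1 - T²) / 2` with `T = |k - n| / n`, and
variance `O(n)`; so `deg / n` is within `O(n^(-1/2))` of `(1 - T²) / 2` in mean square. As `k` is
uniform, `T` is asymptotically uniform on `[0, 1]`, and `(1 - T²) / 2 ≤ b` means `T ≥ √(1 - 2b)`.
-/

open scoped BigOperators Topology

namespace ChordDiagram

variable {n : ℕ}

theorem involutive (C : ChordDiagram n) : Function.Involutive C.1 := C.2.1

theorem apply_ne (C : ChordDiagram n) (x : Fin (2 * n)) : C.1 x ≠ x := C.2.2 x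

instance : Nonempty (ChordDiagram n) :=
  ⟨Fin.rev, Fin.rev_rev, fun i h => by
    have := congrArg Fin.val h
    rw [Fin.val_rev] at this
    omega⟩

/-- Relabelling of the endpoints of a chord diagram by a permutation. These symmetries preserve the
uniform distribution, which is how probabilities of prescribed chords are computed. -/
def relabel (σ : Equiv.Perm (Fin (2 * n))) : ChordDiagram n ≃ ChordDiagram n :=
  (σ.arrowCongr σ).subtypeEquiv fun f => by
    refine and_congr ?_ ?_ <;> refine σ.forall_congr fun {i} => ?_ <;>
      simp [Equiv.arrowCongr_apply]

@[simp]
theorem relabel_apply (σ : Equiv.Perm (Fin (2 * n))) (C : ChordDiagram n) (i : Fin (2 * n)) :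
    (relabel σ C).1 i = σ (C.1 (σ.symm i)) :=
  rfl

theorem exists_apply_eq_of_ne {a b : Fin (2 * n)} (hab : a ≠ b) :
    ∃ C : ChordDiagram n, C.1 a = b := by
  let C := Classical.arbitrary (ChordDiagram n)
  refine ⟨relabel (Equiv.swap (C.1 a) b) C, ?_⟩
  rw [relabel_apply, Equiv.symm_swap, Equiv.swap_apply_of_ne_of_ne (C.apply_ne a).symm hab,
    Equiv.swap_apply_left]

end ChordDiagram

section Probability

variable {n : ℕ}

theorem prob_eq_expect (E : ChordDiagram n → Prop) [DecidablePred E] :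
    prob n E = 𝔼 C, if E C then (1 : ℝ) else 0 := by
  rw [Fintype.expect_eq_sum_div_card, sum_boole, prob, Finset.card_univ]
  congr!

theorem prob_mono {E E' : ChordDiagram n → Prop} (h : ∀ C, E C → E' C) : prob n E ≤ prob n E' := by
  unfold prob
  gcongr
  exact h _

theorem prob_or_le (E E' : ChordDiagram n → Prop) :
    prob n (fun C => E C ∨ E' C) ≤ prob n E + prob n E' := by
  simp only [prob_eq_expect, ← expect_add_distrib]
  refine expect_le_expect fun C _ => ?_
  by_cases h : E C <;> by_cases h' : E' C <;> simp [h, h']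

theorem prob_not (E : ChordDiagram n → Prop) : prob n (fun C => ¬ E C) = 1 - prob n E := by
  simp only [prob_eq_expect, eq_sub_iff_add_eq, ← expect_add_distrib]
  rw [← Fintype.expect_one (ι := ChordDiagram n)]
  exact expect_congr rfl fun C _ => by split_ifs <;> simp

theorem prob_comp_equiv (e : ChordDiagram n ≃ ChordDiagram n) (E : ChordDiagram n → Prop) :
    prob n (fun C => E (e C)) = prob n E := by
  simp only [prob_eq_expect]
  exact Fintype.expect_equiv e _ _ fun _ => rfl

theorem prob_eq_sum_prob_apply_eq (E : ChordDiagram n → Prop) (a : Fin (2 * n)) :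
    prob n E = ∑ x, prob n fun C => E C ∧ C.1 a = x := by
  simp only [prob_eq_expect, ← expect_sum_comm]
  refine expect_congr rfl fun C _ => ?_
  by_cases h : E C <;> simp [h]

theorem prob_le_expect_sq_div {ε : ℝ} (hε : 0 < ε) (f : ChordDiagram n → ℝ) :
    prob n (fun C => ε ≤ |f C|) ≤ (𝔼 C, f C ^ 2) / ε ^ 2 := by
  rw [prob_eq_expect, expect_div]
  refine expect_le_expect fun C _ => ?_
  split_ifs with h
  · rw [one_le_div (by positivity), ← sq_abs (f C)]
    gcongr
  · positivity

theorem expect_filter_boole (E Q : ChordDiagram n → Prop) [DecidablePred E] [DecidablePred Q] :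
    𝔼 C with E C, (if Q C then (1 : ℝ) else 0) = prob n (fun C => E C ∧ Q C) / prob n E := by
  rw [prob, prob, div_div_div_cancel_right₀ (by simp), expect_eq_sum_div_card, sum_boole,
    filter_filter]
  congr!

theorem expect_le_of_expect_apply_eq_le (f : ChordDiagram n → ℝ) (a : Fin (2 * n)) {M : ℝ}
    (h : ∀ x, x ≠ a → 𝔼 C with C.1 a = x, f C ≤ M) : 𝔼 C, f C ≤ M := by
  have hsum (x : Fin (2 * n)) :
      ∑ C with C.1 a = x, f C ≤ #{C : ChordDiagram n | C.1 a = x} * M := by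
    rcases eq_or_ne x a with rfl | hx
    · simp [ChordDiagram.apply_ne]
    · rw [← card_mul_expect]
      gcongr
      exact h x hx
  rw [Fintype.expect_eq_sum_div_card, div_le_iff₀' (by positivity), ← Finset.card_univ,
    card_eq_sum_card_fiberwise (f := fun C : ChordDiagram n => C.1 a) (t := univ) (by simp),
    ← sum_fiberwise univ fun C : ChordDiagram n => C.1 a]
  push_cast
  rw [sum_mul]
  exact sum_le_sum fun x _ => hsum x

/-- An elementary form of Slutsky's theorem. -/
theorem tendsto_prob_le_of_sub_tendsto_zero {X Y : ∀ n, ChordDiagram n → ℝ} {G : ℝ → ℝ} {b : ℝ}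
    (hG : ContinuousAt G b)
    (hY : ∀ c, Tendsto (fun n => prob n fun C => Y n C ≤ c) atTop (𝓝 (G c)))
    (hXY : ∀ ε > 0, Tendsto (fun n => prob n fun C => ε ≤ |X n C - Y n C|) atTop (𝓝 0)) :
    Tendsto (fun n => prob n fun C => X n C ≤ b) atTop (𝓝 (G b)) := by
  have upper {ε : ℝ} (n : ℕ) : prob n (fun C => X n C ≤ b) ≤
      prob n (fun C => Y n C ≤ b + ε) + prob n (fun C => ε ≤ |X n C - Y n C|) := by
    refine (prob_mono fun C hX => ?_).trans (prob_or_le _ _)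
    by_contra! h
    linarith [(abs_lt.mp h.2).1]
  have lower {ε : ℝ} (n : ℕ) : prob n (fun C => Y n C ≤ b - ε) ≤
      prob n (fun C => X n C ≤ b) + prob n (fun C => ε ≤ |X n C - Y n C|) := by
    refine (prob_mono fun C hY => ?_).trans (prob_or_le _ _)
    by_contra! h
    linarith [(abs_lt.mp h.2).2]
  have hGadd : Tendsto (fun ε => G (b + ε)) (𝓝[>] 0) (𝓝 (G b)) :=
    (hG.tendsto.comp (by simpa using (tendsto_id (x := 𝓝 (0 : ℝ))).const_add b)).mono_left
      nhdsWithin_le_nhds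
  have hGsub : Tendsto (fun ε => G (b - ε)) (𝓝[>] 0) (𝓝 (G b)) :=
    (hG.tendsto.comp (by simpa using (tendsto_id (x := 𝓝 (0 : ℝ))).const_sub b)).mono_left
      nhdsWithin_le_nhds
  refine tendsto_order.mpr ⟨fun l hl => ?_, fun u hu => ?_⟩
  · obtain ⟨ε, hlε, hε⟩ := ((hGsub.eventually_const_lt hl).and self_mem_nhdsWithin).exists
    have := ((hY (b - ε)).sub (hXY ε hε)).eventually_const_lt (by simpa using hlε)
    filter_upwards [this] with n hn
    linarith [lower (ε := ε) n]
  · obtain ⟨ε, hεu, hε⟩ := ((hGadd.eventually_lt_const hu).and self_mem_nhdsWithin).exists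
    have := ((hY (b + ε)).add (hXY ε hε)).eventually_lt_const (by simpa using hεu)
    filter_upwards [this] with n hn
    exact (upper n).trans_lt hn

end Probability

section PrescribedChords

variable {n : ℕ}

/-- The endpoints of a list of prescribed chords, in order. That the chords are pairwise disjoint
and nondegenerate is expressed as `(endpoints L).Nodup`. -/
def endpoints {α : Type*} (L : List (α × α)) : List α :=
  L.flatMap fun p => [p.1, p.2]

@[simp]
theorem endpoints_nil {α : Type*} : endpoints ([] : List (α × α)) = [] := rfl

@[simp]
theorem endpoints_cons {α : Type*} (p : α × α) (L : List (α × α)) :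
    endpoints (p :: L) = p.1 :: p.2 :: endpoints L :=
  rfl

@[simp]
theorem length_endpoints {α : Type*} (L : List (α × α)) :
    (endpoints L).length = 2 * L.length := by
  simp [endpoints, List.length_flatMap, mul_comm]

/-- The event that a chord diagram contains every chord of a list. -/
def ChordDiagram.Contains (C : ChordDiagram n) (L : List (Fin (2 * n) × Fin (2 * n))) : Prop :=
  ∀ p ∈ L, C.1 p.1 = p.2

namespace ChordDiagram

@[simp]
theorem contains_nil (C : ChordDiagram n) : C.Contains [] := by simp [Contains]

@[simp]
theorem contains_cons {C : ChordDiagram n} {p : Fin (2 * n) × Fin (2 * n)}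
    {L : List (Fin (2 * n) × Fin (2 * n))} :
    C.Contains (p :: L) ↔ C.1 p.1 = p.2 ∧ C.Contains L := by
  simp [Contains]

theorem Contains.apply_mem_endpoints {C : ChordDiagram n} {L : List (Fin (2 * n) × Fin (2 * n))}
    (hC : C.Contains L) {x : Fin (2 * n)} (hx : x ∈ endpoints L) : C.1 x ∈ endpoints L := by
  simp only [endpoints, List.mem_flatMap, List.mem_cons, List.not_mem_nil, or_false] at hx ⊢
  obtain ⟨p, hp, rfl | rfl⟩ := hx
  · exact ⟨p, hp, Or.inr (hC p hp)⟩
  · exact ⟨p, hp, Or.inl (by rw [← hC p hp, C.involutive])⟩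

theorem contains_relabel_iff {σ : Equiv.Perm (Fin (2 * n))}
    {L : List (Fin (2 * n) × Fin (2 * n))} (hσ : ∀ x ∈ endpoints L, σ x = x) (C : ChordDiagram n) :
    (relabel σ C).Contains L ↔ C.Contains L := by
  refine forall₂_congr fun p hp => ?_
  have h₁ : σ p.1 = p.1 := hσ _ (List.mem_flatMap.mpr ⟨p, hp, by simp⟩)
  have h₂ : σ p.2 = p.2 := hσ _ (List.mem_flatMap.mpr ⟨p, hp, by simp⟩)
  rw [relabel_apply, σ.symm_apply_eq.mpr h₁.symm, ← σ.eq_symm_apply,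
    σ.symm_apply_eq.mpr h₂.symm]

end ChordDiagram

open ChordDiagram

theorem prob_eq_zero {E : ChordDiagram n → Prop} (h : ∀ C, ¬ E C) : prob n E = 0 := by
  simp [prob, h]

theorem prob_contains_and_apply_eq_congr {L : List (Fin (2 * n) × Fin (2 * n))}
    {a x y : Fin (2 * n)} (hax : a ≠ x) (hay : a ≠ y) (hx : x ∉ endpoints L)
    (hy : y ∉ endpoints L) :
    prob n (fun C => C.Contains L ∧ C.1 a = x) = prob n (fun C => C.Contains L ∧ C.1 a = y) := by
  rw [← prob_comp_equiv (relabel (Equiv.swap x y))]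
  congr! 3 with C
  · refine contains_relabel_iff (fun z hz => ?_) C
    exact Equiv.swap_apply_of_ne_of_ne (ne_of_mem_of_not_mem hz hx) (ne_of_mem_of_not_mem hz hy)
  · rw [relabel_apply, Equiv.symm_swap, Equiv.swap_apply_of_ne_of_ne hax hay,
      Equiv.swap_apply_eq_iff, Equiv.swap_apply_left]

theorem prob_contains_and_apply_eq_mul {L : List (Fin (2 * n) × Fin (2 * n))} {a b : Fin (2 * n)}
    (hL : (endpoints ((a, b) :: L)).Nodup) :
    prob n (fun C => C.Contains L ∧ C.1 a = b) * (2 * n - 1 - 2 * L.length) =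
      prob n (fun C => C.Contains L) := by
  simp only [endpoints_cons, List.nodup_cons, List.mem_cons, not_or] at hL
  obtain ⟨⟨hab, ha⟩, hb, hL⟩ := hL
  set T := insert a (endpoints L).toFinset with hT
  have hTcard : #T = 2 * L.length + 1 := by
    rw [hT, card_insert_of_notMem (by simpa using ha), List.toFinset_card_of_nodup hL,
      length_endpoints]
  have hcompl : (#Tᶜ : ℝ) = 2 * n - 1 - 2 * L.length := by
    rw [card_compl, Nat.cast_sub (card_le_univ T), hTcard, Fintype.card_fin]
    push_cast
    ring
  have hocc : ∀ x ∈ T, prob n (fun C => C.Contains L ∧ C.1 a = x) = 0 := by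
    refine fun x hx => prob_eq_zero fun C ⟨hC, hax⟩ => ?_
    rcases mem_insert.mp hx with rfl | hx
    · exact C.apply_ne x hax
    · refine ha ?_
      rw [← C.involutive a, hax]
      exact hC.apply_mem_endpoints (List.mem_toFinset.mp hx)
  have hfree : ∀ x ∈ Tᶜ, prob n (fun C => C.Contains L ∧ C.1 a = x) =
      prob n (fun C => C.Contains L ∧ C.1 a = b) := by
    intro x hx
    simp only [hT, mem_compl, mem_insert, List.mem_toFinset, not_or] at hx
    exact prob_contains_and_apply_eq_congr (Ne.symm hx.1) hab hx.2 hb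
  rw [prob_eq_sum_prob_apply_eq (fun C => C.Contains L) a, ← sum_add_sum_compl T,
    sum_eq_zero hocc, sum_congr rfl hfree, sum_const, nsmul_eq_mul, hcompl]
  ring

theorem prob_contains {L : List (Fin (2 * n) × Fin (2 * n))} (hL : (endpoints L).Nodup) :
    prob n (fun C => C.Contains L) = (∏ i ∈ range L.length, (2 * n - 1 - 2 * i : ℝ))⁻¹ := by
  induction L with
  | nil => simp [prob]
  | cons p L ih =>
    have hlen : L.length + 1 ≤ n := by
      have := hL.length_le_card
      simp only [length_endpoints, List.length_cons, Fintype.card_fin] at this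
      lia
    have hpos : (0 : ℝ) < 2 * n - 1 - 2 * L.length := by
      have : (L.length + 1 : ℝ) ≤ n := by exact_mod_cast hlen
      linarith
    have hmul := prob_contains_and_apply_eq_mul hL
    rw [ih hL.of_cons.of_cons, ← eq_div_iff hpos.ne'] at hmul
    simp only [contains_cons, and_comm, List.length_cons, prod_range_succ, mul_inv]
    rw [hmul, div_eq_mul_inv]

end PrescribedChords

section LinkCount

variable {n : ℕ}

open ChordDiagram

theorem expect_filter_contains {z k : Fin (2 * n)} {L : List (Fin (2 * n) × Fin (2 * n))}
    (hL : (endpoints ((z, k) :: L)).Nodup) :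
    𝔼 C : ChordDiagram n with C.1 z = k, (if C.Contains L then (1 : ℝ) else 0) =
      (∏ i ∈ range L.length, (2 * n - 3 - 2 * i : ℝ))⁻¹ := by
  have hzk : (endpoints [(z, k)]).Nodup := by
    simp only [endpoints_cons, List.nodup_cons, List.mem_cons, not_or] at hL
    simpa using hL.1.1
  have hpos : (0 : ℝ) < 2 * n - 1 := by
    have : (1 : ℝ) ≤ n := by exact_mod_cast (by have := z.pos; lia : 1 ≤ n)
    linarith
  have hboth := prob_contains hL
  have hone := prob_contains hzk
  simp only [contains_cons, contains_nil, and_true, List.length_cons, List.length_nil,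
    prod_range_succ', range_zero, prod_empty, Nat.cast_add, Nat.cast_one, Nat.cast_zero,
    mul_zero, sub_zero, one_mul] at hboth hone
  rw [expect_filter_boole, hboth, hone, mul_inv, mul_div_cancel_right₀ _ (by positivity)]
  congr! 2 with i
  ring

/-- The number of chords joining an endpoint in `A` to an endpoint in `B`; a chord inside `A ∩ B`
would be counted twice, so the notion is meant for disjoint `A` and `B`. -/
def ChordDiagram.linkCount (C : ChordDiagram n) (A B : Finset (Fin (2 * n))) : ℕ :=
  #{u ∈ A | C.1 u ∈ B}

theorem ChordDiagram.linkCount_eq_sum (C : ChordDiagram n) (A B : Finset (Fin (2 * n))) :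
    (C.linkCount A B : ℝ) = ∑ p ∈ A ×ˢ B, if C.Contains [p] then (1 : ℝ) else 0 := by
  rw [sum_product, linkCount, card_filter]
  push_cast
  refine sum_congr rfl fun u _ => ?_
  simp only [contains_cons, contains_nil, and_true, sum_ite_eq]

theorem ChordDiagram.linkCount_eq_linkCount_erase_add_one (C : ChordDiagram n)
    {A B : Finset (Fin (2 * n))} {u v : Fin (2 * n)} (hu : u ∈ A) (hv : v ∈ B) (huv : C.1 u = v) :
    C.linkCount A B = C.linkCount (A.erase u) (B.erase v) + 1 := by
  have h : {w ∈ A | C.1 w ∈ B} = insert u {w ∈ A.erase u | C.1 w ∈ B.erase v} := by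
    ext w
    have : C.1 w = v ↔ w = u := by rw [← huv, C.involutive.injective.eq_iff]
    grind
  rw [linkCount, h, card_insert_of_notMem (by simp), linkCount]

theorem ChordDiagram.linkCount_sq (C : ChordDiagram n) (A B : Finset (Fin (2 * n))) :
    (C.linkCount A B : ℝ) ^ 2 = C.linkCount A B +
      ∑ p ∈ A ×ˢ B, ∑ q ∈ A.erase p.1 ×ˢ B.erase p.2,
        if C.Contains [p, q] then (1 : ℝ) else 0 := by
  conv_lhs => rw [sq]; enter [1]; rw [linkCount_eq_sum]
  conv_rhs => enter [1]; rw [linkCount_eq_sum]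
  rw [sum_mul, ← sum_add_distrib]
  refine sum_congr rfl fun p hp => ?_
  by_cases h : C.1 p.1 = p.2
  · rw [mem_product] at hp
    rw [C.linkCount_eq_linkCount_erase_add_one hp.1 hp.2 h, Nat.cast_add_one, linkCount_eq_sum]
    simp [h, add_comm]
  · simp [h]

section Moments

variable {z k : Fin (2 * n)} {A B : Finset (Fin (2 * n))}

theorem expect_filter_linkCount (hzk : z ≠ k) (hzA : z ∉ A) (hzB : z ∉ B) (hkA : k ∉ A)
    (hkB : k ∉ B) (hAB : Disjoint A B) :
    𝔼 C : ChordDiagram n with C.1 z = k, (C.linkCount A B : ℝ) = #A * #B / (2 * n - 3) := by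
  have hprob : ∀ p ∈ A ×ˢ B,
      𝔼 C : ChordDiagram n with C.1 z = k, (if C.Contains [p] then (1 : ℝ) else 0) =
        (2 * n - 3 : ℝ)⁻¹ := by
    rintro ⟨u, v⟩ hp
    obtain ⟨hu, hv⟩ := mem_product.mp hp
    rw [expect_filter_contains]
    · simp
    · have := disjoint_left.mp hAB
      simp only [endpoints_cons, endpoints_nil, List.nodup_cons, List.mem_cons, List.not_mem_nil,
        List.nodup_nil, or_false, not_or, not_false_eq_true, and_true]
      grind
  simp only [linkCount_eq_sum]
  rw [expect_sum_comm, sum_congr rfl hprob, sum_const, card_product, nsmul_eq_mul]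
  push_cast
  ring

theorem expect_filter_linkCount_sq (hzk : z ≠ k) (hzA : z ∉ A) (hzB : z ∉ B) (hkA : k ∉ A)
    (hkB : k ∉ B) (hAB : Disjoint A B) :
    𝔼 C : ChordDiagram n with C.1 z = k, (C.linkCount A B : ℝ) ^ 2 =
      #A * #B / (2 * n - 3) +
        #A * #B * ((#A - 1) * (#B - 1)) / ((2 * n - 3) * (2 * n - 5)) := by
  have hprob : ∀ p ∈ A ×ˢ B, ∀ q ∈ A.erase p.1 ×ˢ B.erase p.2,
      𝔼 C : ChordDiagram n with C.1 z = k, (if C.Contains [p, q] then (1 : ℝ) else 0) =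
        ((2 * n - 3 : ℝ) * (2 * n - 5))⁻¹ := by
    rintro ⟨u, v⟩ hp ⟨u', v'⟩ hq
    obtain ⟨hu, hv⟩ := mem_product.mp hp
    obtain ⟨⟨hu'ne, hu'⟩, hv'ne, hv'⟩ : (u' ≠ u ∧ u' ∈ A) ∧ v' ≠ v ∧ v' ∈ B := by
      simpa only [mem_product, mem_erase] using hq
    rw [expect_filter_contains]
    · simp only [List.length_cons, List.length_nil, prod_range_succ, range_zero, prod_empty]
      push_cast
      ring
    · have := disjoint_left.mp hAB
      simp only [endpoints_cons, endpoints_nil, List.nodup_cons, List.mem_cons, List.not_mem_nil,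
        List.nodup_nil, or_false, not_or, not_false_eq_true, and_true]
      grind (splits := 20)
  have hinner : ∀ p ∈ A ×ˢ B, ∑ q ∈ A.erase p.1 ×ˢ B.erase p.2,
      𝔼 C : ChordDiagram n with C.1 z = k, (if C.Contains [p, q] then (1 : ℝ) else 0) =
        (#A - 1) * (#B - 1) * ((2 * n - 3 : ℝ) * (2 * n - 5))⁻¹ := by
    intro p hp
    obtain ⟨hu, hv⟩ := mem_product.mp hp
    rw [sum_congr rfl (hprob p hp), sum_const, card_product, nsmul_eq_mul, Nat.cast_mul,
      cast_card_erase_of_mem hu, cast_card_erase_of_mem hv]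
  simp only [linkCount_sq]
  rw [expect_add_distrib, expect_filter_linkCount hzk hzA hzB hkA hkB hAB, expect_sum_comm]
  simp only [expect_sum_comm]
  rw [sum_congr rfl hinner, sum_const, card_product, nsmul_eq_mul]
  push_cast
  ring

end Moments

end LinkCount

section SecondMoment

variable {n : ℕ}

open ChordDiagram

theorem second_moment_sub_sq_mean_le {a b N : ℝ} (hab : a + b = N + 1) (ha : 0 ≤ a) (hb : 0 ≤ b)
    (hN : 3 ≤ N) :
    a * b / N + a * b * ((a - 1) * (b - 1)) / (N * (N - 2)) - (a * b / N) ^ 2 ≤ (N + 3) / 2 := by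
  set x := a * b with hx
  have hx0 : 0 ≤ x := by positivity
  have hx4 : 4 * x ≤ (N + 1) ^ 2 := by nlinarith [sq_nonneg (a - b)]
  have hprod : (a - 1) * (b - 1) = x - N := by linear_combination -hx - hab
  have hid : x / N + x * ((a - 1) * (b - 1)) / (N * (N - 2)) - (x / N) ^ 2 =
      2 * (x * (x - N)) / (N ^ 2 * (N - 2)) := by
    have : N - 2 ≠ 0 := by linarith
    rw [hprod]
    field_simp
    ring
  have hquartic : 16 * (x * (x - N)) ≤ N ^ 4 := by
    rcases le_total x N with h | h
    · nlinarith [mul_nonneg hx0 (sub_nonneg.mpr h), pow_pos (by linarith : 0 < N) 4]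
    · nlinarith [mul_le_mul hx4 (by linarith : 4 * (x - N) ≤ (N - 1) ^ 2) (by linarith)
        (by positivity)]
  have hN2 : 0 < N - 2 := by linarith
  rw [hid, div_le_iff₀ (by positivity)]
  nlinarith [mul_nonneg (sq_nonneg N) (by nlinarith : 0 ≤ 3 * N ^ 2 + 4 * N - 24)]

theorem abs_mean_sub_le_one {a b N : ℝ} (hab : a + b = N + 1) (ha : 0 ≤ a) (hb : 0 ≤ b)
    (hN : 1 ≤ N) :
    |a * b / N - (a + 1) * (b + 1) / (N + 3)| ≤ 1 := by
  have : 0 < N := by linarith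
  have hid : a * b / N - (a + 1) * (b + 1) / (N + 3) =
      (3 * (a * b) - N * (N + 2)) / (N * (N + 3)) := by
    field_simp
    linear_combination -N * hab
  have hden : 0 < N * (N + 3) := by positivity
  rw [hid, abs_div, abs_of_pos hden, div_le_one hden, abs_le]
  constructor <;> nlinarith [sq_nonneg (a - b), mul_nonneg ha hb]

theorem expect_sub_sq {ι K : Type*} [Field K] [CharZero K] {s : Finset ι} (hs : s.Nonempty)
    (f : ι → K) (t : K) :
    𝔼 i ∈ s, (f i - t) ^ 2 = 𝔼 i ∈ s, f i ^ 2 - 2 * t * 𝔼 i ∈ s, f i + t ^ 2 := by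
  simp only [sub_sq', expect_add_distrib, expect_sub_distrib, expect_const hs, mul_expect]
  simp only [mul_right_comm _ _ t]
  ring

theorem expect_filter_linkCount_sub_sq_le {z k : Fin (2 * n)} {A B : Finset (Fin (2 * n))}
    (hn : 3 ≤ n) (hzk : z ≠ k) (hzA : z ∉ A) (hzB : z ∉ B) (hkA : k ∉ A) (hkB : k ∉ B)
    (hAB : Disjoint A B) (hcard : #A + #B + 2 = 2 * n) :
    𝔼 C : ChordDiagram n with C.1 z = k,
      ((C.linkCount A B : ℝ) - (#A + 1) * (#B + 1) / (2 * n)) ^ 2 ≤ (2 * n : ℝ) := by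
  have hn' : (3 : ℝ) ≤ n := by exact_mod_cast hn
  have hsum : (#A + #B : ℝ) = 2 * n - 3 + 1 := by
    rw [eq_sub_of_add_eq (by exact_mod_cast hcard : (#A + #B + 2 : ℝ) = 2 * n)]
    ring
  have hvar := second_moment_sub_sq_mean_le hsum (by positivity) (by positivity) (by linarith)
  have hbias := (sq_le_one_iff_abs_le_one _).mpr <|
    abs_mean_sub_le_one hsum (by positivity) (by positivity) (by linarith)
  obtain ⟨C, hC⟩ := exists_apply_eq_of_ne hzk
  rw [expect_sub_sq ⟨C, by simpa using hC⟩, expect_filter_linkCount hzk hzA hzB hkA hkB hAB,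
    expect_filter_linkCount_sq hzk hzA hzB hkA hkB hAB]
  rw [sub_add_cancel] at hbias
  rw [show (2 * n - 3 - 2 : ℝ) = 2 * n - 5 by ring, sub_add_cancel] at hvar
  nlinarith

end SecondMoment

section FirstChord

variable {n : ℕ}

theorem ChordDiagram.zero_lt_apply_zero [NeZero n] (C : ChordDiagram n) : 0 < C.1 0 :=
  Fin.pos_iff_ne_zero.mpr (C.apply_ne 0)

theorem crosses_zero_iff [NeZero n] {C : ChordDiagram n} {u : Fin (2 * n)} (hu : u < C.1 u) :
    Crosses C 0 u ↔ u ∈ Ioo 0 (C.1 0) ∧ C.1 u ∈ Ioi (C.1 0) := by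
  have hpos := C.zero_lt_apply_zero
  have hpos' : 0 < C.1 u := (Fin.zero_le u).trans_lt hu
  have hne : C.1 u = C.1 0 ↔ u = 0 := C.involutive.injective.eq_iff
  have hzero : 0 < u ↔ u ≠ 0 := Fin.pos_iff_ne_zero
  refine xor_def.trans ?_
  simp only [Between, min_eq_left hpos.le, max_eq_right hpos.le, mem_Ioo, mem_Ioi, hpos', hzero,
    true_and]
  grind

theorem chordDegree_zero_eq_linkCount [NeZero n] (C : ChordDiagram n) :
    chordDegree C 0 = C.linkCount (Ioo 0 (C.1 0)) (Ioi (C.1 0)) := by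
  rw [chordDegree, ChordDiagram.linkCount]
  congr 1
  ext u
  simp only [mem_filter, mem_univ, true_and]
  constructor
  · exact fun ⟨hu, hcross⟩ => (crosses_zero_iff hu).mp hcross
  · intro h
    have hu : u < C.1 u := (mem_Ioo.mp h.1).2.trans (mem_Ioi.mp h.2)
    exact ⟨hu, (crosses_zero_iff hu).mpr h⟩

theorem degreeC1_eq_linkCount [NeZero n] (C : ChordDiagram n) :
    degreeC1 n C = C.linkCount (Ioo 0 (C.1 0)) (Ioi (C.1 0)) := by
  rw [degreeC1, dif_pos (NeZero.pos n)]
  exact chordDegree_zero_eq_linkCount C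

theorem expect_filter_degreeC1_sub_sq_le [NeZero n] (hn : 3 ≤ n) {k : Fin (2 * n)} (hk : k ≠ 0) :
    𝔼 C : ChordDiagram n with C.1 0 = k,
      ((degreeC1 n C : ℝ) - k * (2 * n - k) / (2 * n)) ^ 2 ≤ (2 * n : ℝ) := by
  have : 0 < k := Fin.pos_iff_ne_zero.mpr hk
  have := k.isLt
  have hleft : #(Ioo 0 k) + 1 = (k : ℕ) := by
    rw [Fin.card_Ioo, Fin.val_zero]
    lia
  have hright : #(Ioi k) + 1 + k = 2 * n := by
    rw [Fin.card_Ioi]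
    lia
  have harcs := expect_filter_linkCount_sub_sq_le hn hk.symm (A := Ioo 0 k) (B := Ioi k)
    (by simp) (by simp) (by simp) (by simp)
    (disjoint_left.mpr fun _ hu hu' => (mem_Ioo.mp hu).2.not_gt (mem_Ioi.mp hu')) (by lia)
  rw [show (#(Ioo 0 k) + 1 : ℝ) = k by exact_mod_cast hleft,
    show (#(Ioi k) + 1 : ℝ) = 2 * n - k by rw [eq_sub_iff_add_eq]; exact_mod_cast hright] at harcs
  refine (expect_congr rfl fun C hC => ?_).trans_le harcs
  rw [degreeC1_eq_linkCount, (mem_filter.mp hC).2]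

/-- The distance `|k - n| / n ∈ [0, 1]` of the chord of endpoint `0` from being a diameter, where
`k` is the partner of that endpoint. The value for `n = 0` is irrelevant. -/
noncomputable def offsetC1 (n : ℕ) (C : ChordDiagram n) : ℝ :=
  if h : 0 < n then |(C.1 ⟨0, by omega⟩ : ℝ) - n| / n else 0

theorem offsetC1_eq [NeZero n] (C : ChordDiagram n) :
    offsetC1 n C = |(C.1 0 : ℝ) - n| / n := by
  rw [offsetC1, dif_pos (NeZero.pos n)]
  rfl

theorem expect_degreeC1_div_sub_sq_le (hn : 3 ≤ n) :
    𝔼 C, ((degreeC1 n C : ℝ) / n - (1 - offsetC1 n C ^ 2) / 2) ^ 2 ≤ (2 / n : ℝ) := by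
  have : NeZero n := ⟨by lia⟩
  have hn0 : (n : ℝ) ≠ 0 := NeZero.ne _
  refine expect_le_of_expect_apply_eq_le _ 0 fun k hk => ?_
  have hscale : ∀ C ∈ ({C | C.1 0 = k} : Finset (ChordDiagram n)),
      ((degreeC1 n C : ℝ) / n - (1 - offsetC1 n C ^ 2) / 2) ^ 2 =
        ((degreeC1 n C : ℝ) - k * (2 * n - k) / (2 * n)) ^ 2 / n ^ 2 := by
    intro C hC
    rw [offsetC1_eq, (mem_filter.mp hC).2, div_pow, sq_abs, ← div_pow]
    field_simp
    ring
  rw [expect_congr rfl hscale, ← expect_div, div_le_iff₀ (by positivity)]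
  refine (expect_filter_degreeC1_sub_sq_le hn hk).trans_eq ?_
  field_simp

theorem tendsto_prob_le_abs_degreeC1_div_sub {ε : ℝ} (hε : 0 < ε) :
    Tendsto (fun n => prob n fun C =>
      ε ≤ |(degreeC1 n C : ℝ) / n - (1 - offsetC1 n C ^ 2) / 2|) atTop (𝓝 0) := by
  have hlim : Tendsto (fun n : ℕ => 2 / (n : ℝ) / ε ^ 2) atTop (𝓝 0) := by
    simpa using (tendsto_const_div_atTop_nhds_zero_nat 2).div_const (ε ^ 2)
  refine squeeze_zero' (Eventually.of_forall fun n => ?_) ?_ hlim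
  · unfold prob
    positivity
  · filter_upwards [eventually_ge_atTop 3] with n hn
    refine (prob_le_expect_sq_div hε _).trans ?_
    gcongr
    exact expect_degreeC1_div_sub_sq_le hn

end FirstChord

section LimitLaw

variable {n : ℕ}

theorem prob_apply_eq_card_div (a : Fin (2 * n)) (Q : Fin (2 * n) → Prop) :
    prob n (fun C => Q (C.1 a)) = (#{k | k ≠ a ∧ Q k} : ℝ) / (2 * n - 1) := by
  have hterm (k : Fin (2 * n)) : prob n (fun C => Q (C.1 a) ∧ C.1 a = k) =
      if k ≠ a ∧ Q k then (2 * n - 1 : ℝ)⁻¹ else 0 := by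
    split_ifs with hk
    · have hchord : prob n (fun C => C.Contains [(a, k)]) = (2 * n - 1 : ℝ)⁻¹ := by
        rw [prob_contains (by simpa using hk.1.symm)]
        simp
      rw [← hchord]
      congr! 2 with C
      simp only [ChordDiagram.contains_cons, ChordDiagram.contains_nil, and_true]
      exact ⟨And.right, fun h => ⟨h ▸ hk.2, h⟩⟩
    · refine prob_eq_zero fun C ⟨hQ, hCk⟩ => hk ?_
      rw [← hCk]
      exact ⟨C.apply_ne a, hQ⟩
  rw [prob_eq_sum_prob_apply_eq _ a, sum_congr rfl fun k _ => hterm k, ← sum_filter, sum_const,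
    nsmul_eq_mul, div_eq_mul_inv]

theorem abs_natCast_sub_lt_iff {k m : ℕ} {s : ℝ} :
    |(k : ℝ) - m| < s ↔ ((k : ℤ) - m).natAbs < ⌈s⌉₊ := by
  rw [Nat.lt_ceil, Nat.cast_natAbs]
  push_cast
  rfl

theorem card_filter_abs_sub_lt [NeZero n] (s : ℝ) :
    #{k : Fin (2 * n) | k ≠ 0 ∧ |(k : ℝ) - n| < s} = 2 * min ⌈s⌉₊ n - 1 := by
  have hmap : ({k : Fin (2 * n) | k ≠ 0 ∧ |(k : ℝ) - n| < s} : Finset _).map Fin.valEmbedding =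
      Ioo (n - min ⌈s⌉₊ n) (n + min ⌈s⌉₊ n) := by
    ext k
    simp only [Finset.mem_map, mem_filter, mem_univ, true_and, Fin.valEmbedding_apply, mem_Ioo,
      abs_natCast_sub_lt_iff, ← Fin.val_ne_zero_iff]
    constructor
    · rintro ⟨k, hk, rfl⟩
      lia
    · intro hk
      exact ⟨⟨k, by lia⟩, by dsimp only; lia, rfl⟩
  rw [← card_map Fin.valEmbedding, hmap, Nat.card_Ioo]
  lia

theorem cast_two_mul_sub_one (m : ℕ) : ((2 * m - 1 : ℕ) : ℝ) = max (2 * (m : ℝ) - 1) 0 := by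
  rcases m.eq_zero_or_pos with rfl | hm
  · simp
  · have : (1 : ℝ) ≤ m := by exact_mod_cast hm
    rw [Nat.cast_pred (by lia), max_eq_left (by linarith)]
    push_cast
    rfl

theorem prob_offsetC1_lt [NeZero n] (r : ℝ) :
    prob n (fun C => offsetC1 n C < r) = ((2 * min ⌈r * n⌉₊ n - 1 : ℕ) : ℝ) / (2 * n - 1) := by
  have hn : (0 : ℝ) < n := by exact_mod_cast NeZero.pos n
  simp only [offsetC1_eq, div_lt_iff₀ hn]
  rw [prob_apply_eq_card_div 0 fun k => |(k : ℝ) - n| < r * n, card_filter_abs_sub_lt]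

theorem tendsto_prob_offsetC1_lt {r : ℝ} (hr : 0 ≤ r) :
    Tendsto (fun n => prob n fun C => offsetC1 n C < r) atTop (𝓝 (min r 1)) := by
  have hceil : Tendsto (fun n : ℕ => ((min ⌈r * n⌉₊ n : ℕ) : ℝ) / n) atTop (𝓝 (min r 1)) := by
    refine (((tendsto_nat_ceil_mul_div_atTop hr).comp tendsto_natCast_atTop_atTop).min
      tendsto_const_nhds).congr' ?_
    filter_upwards [eventually_gt_atTop 0] with n hn
    have hn' : (0 : ℝ) < n := by exact_mod_cast hn
    rw [Nat.cast_min, ← min_div_div_right hn'.le, div_self hn'.ne']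
    rfl
  have hinv : Tendsto (fun n : ℕ => (n : ℝ)⁻¹) atTop (𝓝 0) := tendsto_inv_atTop_nhds_zero_nat
  have hlim : Tendsto (fun n : ℕ => max (2 * (((min ⌈r * n⌉₊ n : ℕ) : ℝ) / n) - (n : ℝ)⁻¹) 0 /
      (2 - (n : ℝ)⁻¹)) atTop (𝓝 (min r 1)) := by
    have := (((hceil.const_mul 2).sub hinv).max (tendsto_const_nhds (x := 0))).div
      (hinv.const_sub 2) (by norm_num)
    rwa [sub_zero, sub_zero, max_eq_left (by positivity), mul_div_cancel_left₀ _ two_ne_zero]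
      at this
  refine hlim.congr' ?_
  filter_upwards [eventually_gt_atTop 0] with n hn
  have : NeZero n := ⟨hn.ne'⟩
  have hn' : (0 : ℝ) < n := by exact_mod_cast hn
  have hnum (m : ℕ) : max (2 * (m : ℝ) - 1) 0 = n * max (2 * ((m : ℝ) / n) - (n : ℝ)⁻¹) 0 := by
    rw [mul_max_of_nonneg _ _ hn'.le, mul_zero]
    field_simp
  have hden : (2 * n - 1 : ℝ) = n * (2 - (n : ℝ)⁻¹) := by field_simp
  rw [prob_offsetC1_lt, cast_two_mul_sub_one, hnum, hden, mul_div_mul_left _ _ hn'.ne']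

theorem tendsto_prob_one_sub_offsetC1_sq_le (c : ℝ) :
    Tendsto (fun n => prob n fun C => (1 - offsetC1 n C ^ 2) / 2 ≤ c) atTop
      (𝓝 (1 - min (√(1 - 2 * c)) 1)) := by
  refine ((tendsto_prob_offsetC1_lt (Real.sqrt_nonneg _)).const_sub 1).congr fun n => ?_
  rw [← prob_not]
  congr! 2 with C
  have hoffset : 0 ≤ offsetC1 n C := by
    unfold offsetC1
    split_ifs <;> positivity
  rw [Real.lt_sqrt hoffset, not_lt]
  constructor <;> intro h <;> linarith

end LimitLaw

theorem stmt0 (b : ℝ) (hb0 : 0 ≤ b) (hb1 : b ≤ 1/2) :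
    Filter.Tendsto
      (fun n : ℕ => prob n (fun C => (degreeC1 n C : ℝ) ≤ b * n))
      Filter.atTop (nhds (1 - Real.sqrt (1 - 2*b))) := by
  have hcont : ContinuousAt (fun c : ℝ => 1 - min (√(1 - 2 * c)) 1) b := by fun_prop
  have hlim := tendsto_prob_le_of_sub_tendsto_zero hcont tendsto_prob_one_sub_offsetC1_sq_le
    fun ε hε => tendsto_prob_le_abs_degreeC1_div_sub hε
  have hsqrt : √(1 - 2 * b) ≤ 1 := Real.sqrt_le_one.mpr (by linarith)
  rw [min_eq_left hsqrt] at hlim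
  refine hlim.congr' ?_
  filter_upwards [eventually_gt_atTop 0] with n hn
  simp only [div_le_iff₀ (Nat.cast_pos.mpr hn : (0 : ℝ) < n)]
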